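/- For every integer t with 1 ≤ t ≤ 13 there exists a linear code over the field with 16 elements of length 45, dimension 2t, minimum distance at least 45 − 3t − 3 = 42 − 3t, and locality 2. In particular (t = 11), there exists a linear code over the field with 16 elements of length 45, dimension 22, minimum distance at least 9, and locality 2. -/

import Mathlib

/-!
Let `u` and `v` be polynomials whose degrees differ modulo `n`. On the Kummer curve `v zⁿ = u`, a
function `a(x) + b(x) z` has norm `v aⁿ - u (-b)ⁿ` down to the `x`-line, up to the factor `v`. The
norm is nonzero because the degrees of its two terms differ modulo `n`. It vanishes at `x = c` at
least as often as the function vanishes on the fibre over `c`: two zeros in a fibre force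
`a(c) = b(c) = 0`, and then `(X - c)ⁿ` divides the norm. So a nonzero function has at most
`n (t - 1) + max (deg u) (deg v)` zeros when `deg a, deg b < t`. Two values in a fibre determine
`a(c)` and `b(c)`, which gives locality `2`.

The Kummer cover used here is not the one over an elliptic curve but
`(1 + x² + x⁵) z³ = x + x⁴ + x⁶` over the projective line. All `15` nonzero elements of the field
with `16` elements split completely in it, and the degrees `5` and `6` give the bound `3 t + 3`.
-/

section LocallyRecoverableCodes

open Polynomial Finset

section Norm

variable {R : Type*} [CommRing R]

/-- The norm of `a + b z` for `v zⁿ = u`, multiplied by `v` to clear the denominator of `u / v`. -/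
def kummerNorm (n : ℕ) (u v a b : R) : R :=
  v * a ^ n - u * (-b) ^ n

lemma kummerNorm_mul_mul (n : ℕ) (u v a b c : R) :
    kummerNorm n u v (c * a) (c * b) = c ^ n * kummerNorm n u v a b := by
  rw [kummerNorm, kummerNorm, ← mul_neg, mul_pow, mul_pow]
  ring

lemma eval_kummerNorm (n : ℕ) (u v a b : R[X]) (c : R) :
    (kummerNorm n u v a b).eval c =
      kummerNorm n (u.eval c) (v.eval c) (a.eval c) (b.eval c) := by
  simp [kummerNorm]

lemma kummerNorm_eq_zero_of_add_mul_eq_zero {n : ℕ} {u v a b z : R} (hz : v * z ^ n = u)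
    (h : a + b * z = 0) : kummerNorm n u v a b = 0 := by
  have ha : a = -b * z := by linear_combination h
  rw [kummerNorm, ha, mul_pow, ← hz]
  ring

lemma natDegree_kummerNorm_le {n m d : ℕ} {u v a b : R[X]} (hu : u.natDegree ≤ d)
    (hv : v.natDegree ≤ d) (ha : a.natDegree ≤ m) (hb : b.natDegree ≤ m) :
    (kummerNorm n u v a b).natDegree ≤ d + n * m :=
  natDegree_sub_le_of_le
    (natDegree_mul_le_of_le hv (natDegree_pow_le_of_le n ha))
    (natDegree_mul_le_of_le hu (natDegree_pow_le_of_le n ((natDegree_neg b).trans_le hb))) |>.trans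
    (max_self _).le

lemma kummerNorm_eq_zero_iff [IsDomain R] {n : ℕ} (hn : n ≠ 0) {u v a b : R[X]} (hu : u ≠ 0)
    (hv : v ≠ 0) (huv : ¬ v.natDegree ≡ u.natDegree [MOD n]) :
    kummerNorm n u v a b = 0 ↔ a = 0 ∧ b = 0 := by
  refine ⟨fun h ↦ ?_, fun ⟨ha, hb⟩ ↦ by simp [kummerNorm, ha, hb, hn]⟩
  have hpow : v * a ^ n = u * (-b) ^ n := sub_eq_zero.1 h
  have h_iff : a = 0 ↔ b = 0 := by
    simpa [hu, hv, hn] using congrArg (· = 0) hpow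
  by_contra hab
  have ha : a ≠ 0 := by tauto
  have hb : -b ≠ 0 := neg_ne_zero.2 (by tauto)
  have hdeg : v.natDegree + n * a.natDegree = u.natDegree + n * (-b).natDegree := by
    simpa only [natDegree_mul hv (pow_ne_zero n ha), natDegree_mul hu (pow_ne_zero n hb),
      natDegree_pow] using congrArg natDegree hpow
  exact huv (by simpa [Nat.ModEq] using congrArg (· % n) hdeg)

end Norm

lemma sum_rootMultiplicity_le_natDegree {R : Type*} [CommRing R] [IsDomain R] (p : R[X])
    (s : Finset R) : ∑ c ∈ s, p.rootMultiplicity c ≤ p.natDegree := by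
  classical
  calc ∑ c ∈ s, p.rootMultiplicity c
      = ∑ c ∈ s, p.roots.count c := by simp only [count_roots]
    _ ≤ ∑ c ∈ p.roots.toFinset, p.roots.count c :=
        sum_le_sum_of_ne_zero fun c _ hc ↦
          Multiset.mem_toFinset.2 (Multiset.count_ne_zero.1 hc)
    _ = p.roots.card := Multiset.toFinset_sum_count_eq _
    _ ≤ p.natDegree := card_roots' p

lemma natDegree_le_pred_of_mem_degreeLT {R : Type*} [Semiring R] {t : ℕ} {p : R[X]}
    (hp : p ∈ degreeLT R t) : p.natDegree ≤ t - 1 := by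
  obtain rfl | hp0 := eq_or_ne p 0
  · simp
  · exact Nat.le_sub_one_of_lt ((natDegree_lt_iff_degree_lt hp0).2 (mem_degreeLT.1 hp))

lemma eq_of_add_mul_eq_add_mul {R : Type*} [CommRing R] [IsDomain R] {a b a' b' z₁ z₂ : R}
    (hz : z₁ ≠ z₂) (h₁ : a + b * z₁ = a' + b' * z₁) (h₂ : a + b * z₂ = a' + b' * z₂) :
    a = a' ∧ b = b' := by
  have hb : b = b' :=
    mul_right_cancel₀ (sub_ne_zero.2 hz) (by linear_combination h₁ - h₂)
  subst hb
  exact ⟨add_right_cancel h₁, rfl⟩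

/-- A code has locality `r` if every coordinate of a codeword is determined by at most `r` other
coordinates, whose positions do not depend on the codeword. -/
def HasLocality {R ι : Type*} [Semiring R] (C : Submodule R (ι → R)) (r : ℕ) : Prop :=
  ∀ i, ∃ I : Finset ι, i ∉ I ∧ #I ≤ r ∧
    ∀ f ∈ C, ∀ g ∈ C, (∀ j ∈ I, f j = g j) → f i = g i

/-- A finite family of distinct affine points `(x i, z i)` of the curve `v zⁿ = u` that is a union
of totally split fibres of the projection to the `x`-line. -/
structure IsSplitKummerFamily {K ι : Type*} [Field K] [Fintype ι] [DecidableEq K] (n : ℕ)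
    (u v : K[X]) (x z : ι → K) : Prop where
  injective : Function.Injective fun i ↦ (x i, z i)
  eval_mul_pow : ∀ i, v.eval (x i) * z i ^ n = u.eval (x i)
  card_fibre : ∀ i, #{j | x j = x i} = n

section EvaluationCode

variable {K ι : Type*} [Field K]

/-- Evaluation of the functions `a(x) + b(x) z`, with `a` and `b` of degree less than `t`, at the
points `(x i, z i)`. -/
noncomputable def kummerEval (x z : ι → K) (t : ℕ) :
    (degreeLT K t × degreeLT K t) →ₗ[K] (ι → K) :=
  LinearMap.pi fun i ↦ ((leval (x i)).comp (degreeLT K t).subtype).coprod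
    (z i • (leval (x i)).comp (degreeLT K t).subtype)

/-- The evaluation code of the functions `a(x) + b(x) z`, with `a` and `b` of degree less than `t`,
at the points `(x i, z i)`. -/
noncomputable def kummerCode (x z : ι → K) (t : ℕ) : Submodule K (ι → K) :=
  LinearMap.range (kummerEval x z t)

lemma kummerEval_apply (x z : ι → K) (t : ℕ) (p : degreeLT K t × degreeLT K t) (i : ι) :
    kummerEval x z t p i = (p.1 : K[X]).eval (x i) + (p.2 : K[X]).eval (x i) * z i := by
  simp [kummerEval, leval, mul_comm]

variable [Fintype ι] [DecidableEq K] {n d t : ℕ} {u v : K[X]} {x z : ι → K}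

namespace IsSplitKummerFamily

lemma ne_of_ne (h : IsSplitKummerFamily n u v x z) {i j : ι} (hij : i ≠ j) (hx : x i = x j) :
    z i ≠ z j :=
  fun hz ↦ hij (h.injective (Prod.ext hx hz))

lemma card_zeros_fibre_le_rootMultiplicity (h : IsSplitKummerFamily n u v x z) {a b : K[X]}
    (hN : kummerNorm n u v a b ≠ 0) (c : K) :
    #{i | a.eval (x i) + b.eval (x i) * z i = 0 ∧ x i = c} ≤
      (kummerNorm n u v a b).rootMultiplicity c := by
  set Z : Finset ι := {i | a.eval (x i) + b.eval (x i) * z i = 0 ∧ x i = c} with hZ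
  obtain hZ_empty | ⟨i, hi⟩ := Z.eq_empty_or_nonempty
  · simp [hZ_empty]
  obtain ⟨hi0, rfl⟩ : a.eval (x i) + b.eval (x i) * z i = 0 ∧ x i = c := by simpa [hZ] using hi
  obtain hZ_one | hZ_two := le_or_gt #Z 1
  · have hroot : (kummerNorm n u v a b).IsRoot (x i) := by
      rw [IsRoot, eval_kummerNorm]
      exact kummerNorm_eq_zero_of_add_mul_eq_zero (h.eval_mul_pow i) hi0
    exact hZ_one.trans ((rootMultiplicity_pos hN).2 hroot)
  · obtain ⟨j, hj, hji⟩ := exists_mem_ne hZ_two i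
    obtain ⟨hj0, hjx⟩ : a.eval (x j) + b.eval (x j) * z j = 0 ∧ x j = x i := by
      simpa [hZ] using hj
    obtain ⟨ha, hb⟩ : a.eval (x i) = 0 ∧ b.eval (x i) = 0 :=
      eq_of_add_mul_eq_add_mul (h.ne_of_ne hji hjx) (by simpa [hjx] using hj0) (by simpa using hi0)
    obtain ⟨a, rfl⟩ := dvd_iff_isRoot.2 ha
    obtain ⟨b, rfl⟩ := dvd_iff_isRoot.2 hb
    have hdvd : (X - C (x i)) ^ n ∣
        kummerNorm n u v ((X - C (x i)) * a) ((X - C (x i)) * b) := by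
      rw [kummerNorm_mul_mul]
      exact dvd_mul_right _ _
    calc #Z ≤ #{j | x j = x i} := card_le_card fun j hj ↦ by simp_all
      _ = n := h.card_fibre i
      _ ≤ _ := (le_rootMultiplicity_iff hN).2 hdvd

lemma card_zeros_le_natDegree (h : IsSplitKummerFamily n u v x z) {a b : K[X]}
    (hN : kummerNorm n u v a b ≠ 0) :
    #{i | a.eval (x i) + b.eval (x i) * z i = 0} ≤ (kummerNorm n u v a b).natDegree := by
  rw [card_eq_sum_card_image x]
  refine le_trans (sum_le_sum fun c _ ↦ ?_) (sum_rootMultiplicity_le_natDegree _ _)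
  simpa only [filter_filter] using h.card_zeros_fibre_le_rootMultiplicity hN c

lemma card_le_hammingNorm_kummerEval_add (h : IsSplitKummerFamily n u v x z)
    (hN : ∀ a b : K[X], kummerNorm n u v a b = 0 → a = 0 ∧ b = 0)
    (hu : u.natDegree ≤ d) (hv : v.natDegree ≤ d) {p : degreeLT K t × degreeLT K t}
    (hp : p ≠ 0) :
    Fintype.card ι ≤ hammingNorm (kummerEval x z t p) + (d + n * (t - 1)) := by
  have hNp : kummerNorm n u v (p.1 : K[X]) p.2 ≠ 0 := fun h0 ↦
    have hp0 := hN _ _ h0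
    hp (Prod.ext (Subtype.ext hp0.1) (Subtype.ext hp0.2))
  have hzeros : #{i | kummerEval x z t p i = 0} ≤ d + n * (t - 1) := by
    simp only [kummerEval_apply]
    exact (h.card_zeros_le_natDegree hNp).trans
      (natDegree_kummerNorm_le hu hv (natDegree_le_pred_of_mem_degreeLT p.1.2)
        (natDegree_le_pred_of_mem_degreeLT p.2.2))
  rw [← card_univ, ← card_filter_add_card_filter_not fun i ↦ kummerEval x z t p i = 0, add_comm]
  exact Nat.add_le_add_left hzeros _

lemma finrank_kummerCode (h : IsSplitKummerFamily n u v x z)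
    (hN : ∀ a b : K[X], kummerNorm n u v a b = 0 → a = 0 ∧ b = 0)
    (hu : u.natDegree ≤ d) (hv : v.natDegree ≤ d) (ht : d + n * (t - 1) < Fintype.card ι) :
    Module.finrank K (kummerCode x z t) = 2 * t := by
  have hinj : Function.Injective (kummerEval x z t) := by
    refine (injective_iff_map_eq_zero _).2 fun p hp ↦ by_contra fun hp0 ↦ ?_
    have := h.card_le_hammingNorm_kummerEval_add hN hu hv hp0
    rw [hp, hammingNorm_zero, zero_add] at this
    exact this.not_gt ht
  rw [kummerCode, LinearMap.finrank_range_of_inj hinj, Module.finrank_prod,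
    (degreeLTEquiv K t).finrank_eq, Module.finrank_fin_fun, two_mul]

lemma card_le_hammingNorm_add (h : IsSplitKummerFamily n u v x z)
    (hN : ∀ a b : K[X], kummerNorm n u v a b = 0 → a = 0 ∧ b = 0)
    (hu : u.natDegree ≤ d) (hv : v.natDegree ≤ d) {f : ι → K} (hf : f ∈ kummerCode x z t)
    (hf0 : f ≠ 0) : Fintype.card ι ≤ hammingNorm f + (d + n * (t - 1)) := by
  obtain ⟨p, rfl⟩ := hf
  exact h.card_le_hammingNorm_kummerEval_add hN hu hv (by rintro rfl; simp at hf0)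

lemma hasLocality_two (h : IsSplitKummerFamily n u v x z) (hn : 3 ≤ n) (t : ℕ) :
    HasLocality (kummerCode x z t) 2 := by
  classical
  intro i
  have hcard : 2 ≤ #(({j | x j = x i} : Finset ι).erase i) := by
    rw [card_erase_of_mem (by simp), h.card_fibre i]
    lia
  obtain ⟨I, hI, hI_card⟩ := exists_subset_card_eq hcard
  have hIx : ∀ j ∈ I, x j = x i := fun j hj ↦ by simpa using mem_of_mem_erase (hI hj)
  refine ⟨I, fun hi ↦ notMem_erase i _ (hI hi), hI_card.le, ?_⟩
  rintro _ ⟨p, rfl⟩ _ ⟨q, rfl⟩ hpq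
  obtain ⟨j, k, hjk, rfl⟩ := card_eq_two.1 hI_card
  have hj := hpq j (by simp)
  have hk := hpq k (by simp)
  have hxj := hIx j (by simp)
  have hxk := hIx k (by simp)
  simp only [kummerEval_apply, hxj, hxk] at hj hk ⊢
  obtain ⟨ha, hb⟩ := eq_of_add_mul_eq_add_mul (h.ne_of_ne hjk (hxj.trans hxk.symm)) hj hk
  rw [ha, hb]

lemma comp_equiv {κ : Type*} [Fintype κ] (h : IsSplitKummerFamily n u v x z) (e : κ ≃ ι) :
    IsSplitKummerFamily n u v (x ∘ e) (z ∘ e) where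
  injective := h.injective.comp e.injective
  eval_mul_pow i := h.eval_mul_pow (e i)
  card_fibre i := (card_equiv e fun j ↦ by simp).trans (h.card_fibre (e i))

end IsSplitKummerFamily

lemma isSplitKummerFamily_of_isPrimitiveRoot {ζ : K} (hζ : IsPrimitiveRoot ζ n) {w : ι → K}
    (hx : Function.Injective x) (hw : ∀ i, w i ≠ 0)
    (h : ∀ i, v.eval (x i) * w i ^ n = u.eval (x i)) :
    IsSplitKummerFamily n u v (fun p : ι × Fin n ↦ x p.1) (fun p ↦ ζ ^ (p.2 : ℕ) * w p.1) where
  injective := by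
    rintro ⟨i, k⟩ ⟨j, l⟩ hp
    obtain ⟨hij, hkl⟩ := Prod.ext_iff.1 hp
    obtain rfl : i = j := hx hij
    exact Prod.ext rfl
      (Fin.ext (hζ.pow_inj k.is_lt l.is_lt (mul_right_cancel₀ (hw i) hkl)))
  eval_mul_pow p := by
    rw [mul_pow, pow_right_comm, hζ.pow_eq_one, one_pow, one_mul, h]
  card_fibre p := by
    classical
    have hfibre : ({q | x q.1 = x p.1} : Finset (ι × Fin n)) = {p.1} ×ˢ univ := by
      ext q
      simp only [mem_filter_univ, hx.eq_iff, mem_product, mem_singleton, mem_univ, and_true]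
    rw [hfibre, card_product, card_singleton, one_mul, card_univ, Fintype.card_fin]

end EvaluationCode

section SixteenElements

variable {R : Type*} [CommRing R] [CharP R 2]

lemma add_add_pow_four (a b c : R) : (a + b + c) ^ 4 = a ^ 4 + b ^ 4 + c ^ 4 := by
  simp only [show 4 = 2 * 2 from rfl, pow_mul, CharTwo.add_sq]

lemma pow_five_eq_pow_five_of_pow_fifteen_eq_one {x : R} (hx : x ^ 15 = 1) :
    (x + x ^ 4 + x ^ 6) ^ 5 = (1 + x ^ 2 + x ^ 5) ^ 5 := by
  have h2 : (2 : R) = 0 := CharTwo.two_eq_zero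
  -- With `u = x + x⁴ + x⁶` and `v = 1 + x² + x⁵`, we have `u(x) = x⁶ v(x⁻¹)`. The middle term
  -- `v(x)⁵ = v(x⁴) v(x)` is invariant under `x ↦ x⁻¹` because `x¹⁵ = 1`.
  calc (x + x ^ 4 + x ^ 6) ^ 5
      = (x ^ 4 + (x ^ 4) ^ 4 + (x ^ 6) ^ 4) * (x + x ^ 4 + x ^ 6) := by
        rw [pow_succ _ 4, add_add_pow_four]
    _ = 1 + x ^ 2 + x ^ 7 + x ^ 8 + x ^ 13 := by
        linear_combination
          (1 + x ^ 2 + x ^ 5 + x ^ 7 + x ^ 10 + x ^ 13 + x ^ 15) * hx + (x ^ 5 + x ^ 10) * h2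
    _ = (1 ^ 4 + (x ^ 2) ^ 4 + (x ^ 5) ^ 4) * (1 + x ^ 2 + x ^ 5) := by
        linear_combination -(x ^ 5 + x ^ 7 + x ^ 10) * hx - (x ^ 5 + x ^ 10) * h2
    _ = (1 + x ^ 2 + x ^ 5) ^ 5 := by
        rw [← add_add_pow_four, ← pow_succ]

lemma one_add_sq_add_pow_five_ne_zero_of_pow_fifteen_eq_one [IsDomain R] {x : R}
    (hx : x ^ 15 = 1) : 1 + x ^ 2 + x ^ 5 ≠ 0 := by
  intro hv
  have hx0 : x ≠ 0 := by
    rintro rfl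
    simp at hx
  have hu : x + x ^ 4 + x ^ 6 = 0 := by
    rw [← pow_eq_zero_iff (n := 5) (by norm_num), pow_five_eq_pow_five_of_pow_fifteen_eq_one hx, hv]
    simp
  have hx1 : x = 1 :=
    mul_left_cancel₀ (pow_ne_zero 3 hx0) (by linear_combination hu - x * hv)
  have h2 : (2 : R) = 0 := CharTwo.two_eq_zero
  rw [hx1] at hv
  exact one_ne_zero (by linear_combination hv - h2)

lemma exists_mul_cube_eq_of_pow_fifteen_eq_one {K : Type*} [Field K] [CharP K 2] {x : K}
    (hx : x ^ 15 = 1) : ∃ w ≠ 0, (1 + x ^ 2 + x ^ 5) * w ^ 3 = x + x ^ 4 + x ^ 6 := by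
  have hv := one_add_sq_add_pow_five_ne_zero_of_pow_fifteen_eq_one hx
  have huv := pow_five_eq_pow_five_of_pow_fifteen_eq_one hx
  have hu : x + x ^ 4 + x ^ 6 ≠ 0 := by
    rw [← pow_ne_zero_iff (n := 5) (by norm_num), huv]
    exact pow_ne_zero 5 hv
  generalize x + x ^ 4 + x ^ 6 = u at *
  generalize 1 + x ^ 2 + x ^ 5 = v at *
  -- `(u / v)⁶ = u / v` because `(u / v)⁵ = 1`.
  refine ⟨(u / v) ^ 2, pow_ne_zero 2 (div_ne_zero hu hv), ?_⟩
  field_simp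
  exact huv

lemma exists_isSplitKummerFamily_of_card_eq_sixteen {K : Type*} [Field K] [Fintype K]
    [DecidableEq K] (hK : Fintype.card K = 16) :
    ∃ x z : Fin 45 → K,
      IsSplitKummerFamily 3 (X + X ^ 4 + X ^ 6) (1 + X ^ 2 + X ^ 5) x z := by
  have : CharP K 2 := charP_of_card_eq_prime_pow (f := 4) hK
  have hunits : Fintype.card Kˣ = 15 := by rw [Fintype.card_units, hK]
  obtain ⟨ζ, hζ⟩ := exists_prime_orderOf_dvd_card (G := Kˣ) 3 (by rw [hunits]; norm_num)
  have hζ_prim : IsPrimitiveRoot (ζ : K) 3 :=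
    IsPrimitiveRoot.coe_units_iff.2 (IsPrimitiveRoot.iff_orderOf.2 hζ)
  have hpow (x : Kˣ) : (x : K) ^ 15 = 1 := by
    rw [← Units.val_pow_eq_pow_val, ← hunits, pow_card_eq_one, Units.val_one]
  choose w hw0 hw using fun x : Kˣ ↦ exists_mul_cube_eq_of_pow_fifteen_eq_one (hpow x)
  have hfamily : IsSplitKummerFamily 3 (X + X ^ 4 + X ^ 6 : K[X]) (1 + X ^ 2 + X ^ 5) _ _ :=
    isSplitKummerFamily_of_isPrimitiveRoot hζ_prim Units.val_injective hw0 (by simpa using hw)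
  have hcard : Fintype.card (Kˣ × Fin 3) = 45 := by
    rw [Fintype.card_prod, hunits, Fintype.card_fin]
  exact ⟨_, _, hfamily.comp_equiv (Fintype.equivFinOfCardEq hcard).symm⟩

end SixteenElements

theorem exists_LRC_F16_length45_general {K : Type*} [Field K] (hK : Nat.card K = 16) {t : ℕ}
    (ht : 1 ≤ t) (ht' : t ≤ 13) :
    ∃ C : Submodule K (Fin 45 → K), Module.finrank K C = 2 * t ∧
      (∀ f ∈ C, f ≠ 0 → 42 - 3 * t ≤ Nat.card {i // f i ≠ 0}) ∧ HasLocality C 2 := by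
  classical
  have : Finite K := Nat.finite_of_card_ne_zero (by lia)
  have : Fintype K := Fintype.ofFinite K
  rw [Nat.card_eq_fintype_card] at hK
  obtain ⟨x, z, h⟩ := exists_isSplitKummerFamily_of_card_eq_sixteen hK
  have hu : (X + X ^ 4 + X ^ 6 : K[X]).natDegree = 6 := by compute_degree!
  have hv : (1 + X ^ 2 + X ^ 5 : K[X]).natDegree = 5 := by compute_degree!
  have hu0 : (X + X ^ 4 + X ^ 6 : K[X]) ≠ 0 := ne_zero_of_natDegree_gt (n := 0) (by lia)
  have hv0 : (1 + X ^ 2 + X ^ 5 : K[X]) ≠ 0 := ne_zero_of_natDegree_gt (n := 0) (by lia)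
  have hN (a b : K[X]) :
      kummerNorm 3 (X + X ^ 4 + X ^ 6) (1 + X ^ 2 + X ^ 5) a b = 0 → a = 0 ∧ b = 0 :=
    (kummerNorm_eq_zero_iff three_ne_zero hu0 hv0 (by rw [hu, hv]; decide)).1
  refine ⟨kummerCode x z t, ?_, fun f hf hf0 ↦ ?_, h.hasLocality_two le_rfl t⟩
  · exact h.finrank_kummerCode hN hu.le (by lia) (by rw [Fintype.card_fin]; lia)
  · have := h.card_le_hammingNorm_add hN hu.le (by lia) hf hf0
    rw [Fintype.card_fin] at this
    rw [Nat.card_eq_fintype_card, Fintype.card_subtype]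
    change 42 - 3 * t ≤ hammingNorm f
    lia

end LocallyRecoverableCodes

theorem exists_LRC_F16_length45 :
    ∀ t : ℕ, 1 ≤ t → t ≤ 13 →
      ∃ C : Submodule (GaloisField 2 4) (Fin 45 → GaloisField 2 4),
        Module.finrank (GaloisField 2 4) C = 2 * t ∧
        (∀ x : Fin 45 → GaloisField 2 4, x ∈ C → x ≠ 0 →
          42 - 3 * t ≤ Nat.card {i : Fin 45 // x i ≠ 0}) ∧
        (∀ i : Fin 45, ∃ I : Finset (Fin 45), i ∉ I ∧ I.card ≤ 2 ∧
          ∀ x ∈ C, ∀ y ∈ C, (∀ j ∈ I, x j = y j) → x i = y i) := by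
  intro t ht ht'
  exact exists_LRC_F16_length45_general
    (by rw [GaloisField.card 2 4 four_ne_zero]; norm_num) ht ht'
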